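/- Let μ be a probability measure on the unit sphere S² ⊆ ℝ³ given by density J(n) = N_T/(nᵀT⁻²n)² plus a central symmetric integrable perturbation v with ∫ v dS = 0 and J + v ≥ 0. Define, for each unit vector n₀, r(n₀) = 2 n₀ᵀ (∫ (J(n)+v(n)) 1_{n₀·n ≥ 0} n dS(n)) / √(n₀ᵀ T² n₀). Then inf_{n₀} r(n₀) ≤ 2π N_T |det T|. -/

import Mathlib

open MeasureTheory RealInnerProductSpace

/-! The infimum of the principal radius is at most its average over any probability measure of
directions. Take the directions `L⁻¹ m / ‖L⁻¹ m‖`, with `m` distributed on the sphere according to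
the density `N / ‖L⁻¹ m‖ ^ (d + 1)`: the denominator `‖L n₀‖` becomes `‖L⁻¹ m‖⁻¹`, so the average
is the double integral of `2 N max ⟪L⁻¹ m, n⟫ 0 / ‖L⁻¹ m‖ ^ (d + 1)` against `dS(m) dμ(n)`. Here
the integral over `m` is the same for every unit vector `n`, so the average does not depend on `μ`.
That integral comes from `∫ max ⟪L⁻¹ x, n⟫ 0 * exp (-‖L⁻¹ x‖ ^ 2) dx`, evaluated once by the
substitution `x = L y` and once in polar coordinates.
-/

section GaussianIntegrals

open Real Set

theorem integral_Ioi_pow_mul_exp_neg_mul_sq (k : ℕ) {c : ℝ} (hc : 0 < c) :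
    ∫ x in Ioi (0 : ℝ), x ^ k * exp (-(x * c) ^ 2) = Gamma ((k + 1) / 2) / 2 / c ^ (k + 1) := by
  have hq : (-1 : ℝ) < k := neg_one_lt_zero.trans_le k.cast_nonneg
  have hscale : (c ^ 2) ^ (-((k : ℝ) + 1) / 2) = (c ^ (k + 1))⁻¹ := by
    rw [← rpow_natCast c 2, ← rpow_mul hc.le, ← rpow_natCast c (k + 1), ← rpow_neg hc.le]
    congr 1
    push_cast
    ring
  have hgamma := integral_rpow_mul_exp_neg_mul_rpow two_pos hq (sq_pos_of_pos hc)
  simp only [rpow_natCast, rpow_two, hscale] at hgamma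
  simp only [mul_pow, mul_comm _ (c ^ 2), ← neg_mul, hgamma]
  ring

theorem integral_max_zero_mul_exp_neg_sq : ∫ x : ℝ, max x 0 * exp (-x ^ 2) = 1 / 2 := by
  have hindicator : (fun x : ℝ ↦ max x 0 * exp (-x ^ 2)) =
      (Ioi 0).indicator fun x ↦ x ^ 1 * exp (-(x * 1) ^ 2) := by
    ext x
    rcases lt_or_ge 0 x with hx | hx
    · simp [hx, hx.le]
    · simp [hx, hx.not_gt]
  rw [hindicator, integral_indicator measurableSet_Ioi,
    integral_Ioi_pow_mul_exp_neg_mul_sq 1 one_pos]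
  norm_num

theorem integral_max_coord_mul_exp_neg_norm_sq {ι : Type*} [Fintype ι] (i : ι) :
    ∫ y : EuclideanSpace ℝ ι, max (y i) 0 * exp (-‖y‖ ^ 2) = √π ^ (Fintype.card ι - 1) / 2 := by
  classical
  let f : ι → ℝ → ℝ := fun j x ↦ (if j = i then max x 0 else 1) * exp (-x ^ 2)
  have hf : ∀ j, ∫ x, f j x = if j = i then 1 / 2 else √π := by
    intro j
    by_cases hj : j = i
    · simpa only [f, hj, if_true] using integral_max_zero_mul_exp_neg_sq
    · simpa [f, hj] using integral_gaussian 1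
  have hprod : ∀ x : ι → ℝ, max (x i) 0 * exp (-‖WithLp.toLp 2 x‖ ^ 2) = ∏ j, f j (x j) := by
    intro x
    simp only [f, Finset.prod_mul_distrib, Finset.prod_ite_eq', Finset.mem_univ, if_true,
      ← exp_sum, Finset.sum_neg_distrib, EuclideanSpace.real_norm_sq_eq]
  rw [← (PiLp.volume_preserving_toLp ι).integral_comp
    (MeasurableEquiv.toLp 2 (ι → ℝ)).measurableEmbedding]
  simp only [hprod, integral_fintype_prod_volume_eq_prod, hf]
  rw [← Finset.mul_prod_erase _ _ (Finset.mem_univ i), if_pos rfl,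
    Finset.prod_congr rfl fun j hj ↦ if_neg (Finset.ne_of_mem_erase hj), Finset.prod_const,
    Finset.card_erase_of_mem (Finset.mem_univ i), Finset.card_univ]
  ring

end GaussianIntegrals

section PolarCoordinates

open Module

variable {E F : Type*} [NormedAddCommGroup E] [NormedSpace ℝ E] [FiniteDimensional ℝ E]
  [MeasurableSpace E] [BorelSpace E] [NormedAddCommGroup F] [NormedSpace ℝ F]

theorem integral_comp_linearEquiv_symm (μ : Measure E) [μ.IsAddHaarMeasure] (L : E ≃ₗ[ℝ] E)
    (f : E → F) :
    ∫ x, f (L.symm x) ∂μ = |LinearMap.det (L : E →ₗ[ℝ] E)| • ∫ x, f x ∂μ := by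
  have hdet : LinearMap.det (L.symm : E →ₗ[ℝ] E) ≠ 0 := L.symm.isUnit_det'.ne_zero
  have hmap := Measure.map_linearMap_addHaar_eq_smul_addHaar μ hdet
  have hemb := L.symm.toContinuousLinearEquiv.toHomeomorph.measurableEmbedding
  calc ∫ x, f (L.symm x) ∂μ = ∫ x, f x ∂(μ.map L.symm) := (hemb.integral_map f).symm
    _ = |LinearMap.det (L : E →ₗ[ℝ] E)| • ∫ x, f x ∂μ := by
      rw [show μ.map L.symm = _ from hmap, integral_smul_measure,
        ENNReal.toReal_ofReal (abs_nonneg _), ← LinearEquiv.det_coe_symm, LinearEquiv.symm_symm]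

theorem integral_volumeIoiPow (k : ℕ) (f : ℝ → F) :
    ∫ t, f (t : ℝ) ∂(Measure.volumeIoiPow k) = ∫ t in Set.Ioi (0 : ℝ), t ^ k • f t := by
  rw [Measure.volumeIoiPow, integral_withDensity_eq_integral_toReal_smul (by fun_prop) (by simp),
    ← integral_subtype_comap measurableSet_Ioi fun t : ℝ ↦ t ^ k • f t]
  congr 1
  ext t
  rw [ENNReal.toReal_ofReal (pow_nonneg (le_of_lt t.2) _)]

theorem integral_eq_integral_toSphere_integral_Ioi [Nontrivial E] (μ : Measure E)
    [μ.IsAddHaarMeasure] {f : E → F} (hf : Integrable f μ) :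
    ∫ x, f x ∂μ = ∫ m : Metric.sphere (0 : E) 1,
      (∫ t in Set.Ioi (0 : ℝ), t ^ (finrank ℝ E - 1) • f (t • (m : E))) ∂μ.toSphere := by
  have hpolar := μ.measurePreserving_homeomorphUnitSphereProd
  have hemb := (homeomorphUnitSphereProd E).measurableEmbedding
  have hcompl := (measurableSet_singleton (0 : E)).compl
  let g : Metric.sphere (0 : E) 1 × Set.Ioi (0 : ℝ) → F := fun p ↦ f ((p.2 : ℝ) • (p.1 : E))
  have hg : ∀ x : ({0}ᶜ : Set E), g (homeomorphUnitSphereProd E x) = f x := fun x ↦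
    congrArg (fun y : ({0}ᶜ : Set E) ↦ f y) ((homeomorphUnitSphereProd E).symm_apply_apply x)
  have hint : Integrable g (μ.toSphere.prod (Measure.volumeIoiPow (finrank ℝ E - 1))) := by
    rw [← hpolar.integrable_comp_emb hemb, show g ∘ homeomorphUnitSphereProd E = _ from funext hg]
    exact (integrableOn_iff_comap_subtypeVal hcompl).1 hf.integrableOn
  calc ∫ x, f x ∂μ = ∫ x : ({0}ᶜ : Set E), f x ∂(μ.comap (↑)) := by
        rw [integral_subtype_comap hcompl, restrict_compl_singleton]
    _ = ∫ p, g p ∂(μ.toSphere.prod (Measure.volumeIoiPow (finrank ℝ E - 1))) := by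
        rw [← hpolar.integral_comp hemb]
        simp only [hg]
    _ = _ := by
        rw [integral_prod _ hint]
        exact integral_congr_ae (.of_forall fun m ↦
          integral_volumeIoiPow _ fun t ↦ f (t • (m : E)))

end PolarCoordinates

/-- The integral of `m ↦ max ⟪m, e⟫ 0` over the unit sphere of a Euclidean space of dimension `d`,
for any unit vector `e`, in closed form. -/
noncomputable def hemisphereMoment (d : ℕ) : ℝ :=
  √Real.pi ^ (d - 1) / Real.Gamma ((d + 1) / 2)

theorem hemisphereMoment_three : hemisphereMoment 3 = Real.pi := by
  rw [hemisphereMoment, show ((3 : ℕ) + 1 : ℝ) / 2 = 2 by norm_num, Real.Gamma_two,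
    Real.sq_sqrt Real.pi_nonneg, div_one]

section SphereIntegrals

open Module Real

variable {E : Type*} [NormedAddCommGroup E] [InnerProductSpace ℝ E] [FiniteDimensional ℝ E]

theorem exists_orthonormalBasis_eq {u : E} (hu : ‖u‖ = 1) :
    ∃ (b : OrthonormalBasis (Fin (finrank ℝ E)) ℝ E) (i : Fin (finrank ℝ E)), b i = u := by
  have : Nontrivial E := ⟨u, 0, ne_of_apply_ne norm (by simp [hu])⟩
  let i : Fin (finrank ℝ E) := ⟨0, finrank_pos⟩
  have hortho : Orthonormal ℝ (Set.domRestrict {i} fun _ ↦ u) :=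
    ⟨fun _ ↦ hu, fun j k hjk ↦ absurd (Subsingleton.elim j k) hjk⟩
  obtain ⟨b, hb⟩ := hortho.exists_orthonormalBasis_extension_of_card_eq (by simp)
  exact ⟨b, i, hb i rfl⟩

theorem integral_Ioi_pow_smul_max_inner_mul_exp [Nontrivial E] {x : E} (hx : x ≠ 0) (u : E) :
    ∫ t in Set.Ioi (0 : ℝ),
        t ^ (finrank ℝ E - 1) • (max ⟪t • x, u⟫ 0 * exp (-‖t • x‖ ^ 2))
      = Gamma ((finrank ℝ E + 1) / 2) / 2 * (max ⟪x, u⟫ 0 / ‖x‖ ^ (finrank ℝ E + 1)) := by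
  have hhomog : ∀ t ∈ Set.Ioi (0 : ℝ),
      t ^ (finrank ℝ E - 1) • (max ⟪t • x, u⟫ 0 * exp (-‖t • x‖ ^ 2)) =
        max ⟪x, u⟫ 0 * (t ^ finrank ℝ E * exp (-(t * ‖x‖) ^ 2)) := by
    intro t ht
    have ht0 : 0 ≤ t := le_of_lt ht
    have hmax : max ⟪t • x, u⟫ 0 = t * max ⟪x, u⟫ 0 := by
      rw [mul_max_of_nonneg _ _ ht0, mul_zero, real_inner_smul_left]
    rw [hmax, norm_smul, norm_of_nonneg ht0, smul_eq_mul, ← pow_sub_one_mul finrank_pos.ne' t]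
    ring
  rw [setIntegral_congr_fun measurableSet_Ioi hhomog, integral_const_mul,
    integral_Ioi_pow_mul_exp_neg_mul_sq _ (norm_pos_iff.2 hx)]
  ring

variable [MeasurableSpace E] [BorelSpace E]

theorem integral_max_inner_mul_exp_neg_norm_sq (u : E) :
    ∫ y : E, max ⟪y, u⟫ 0 * exp (-‖y‖ ^ 2) = √π ^ (finrank ℝ E - 1) / 2 * ‖u‖ := by
  rcases eq_or_ne u 0 with rfl | hu
  · simp
  obtain ⟨b, i, hb⟩ := exists_orthonormalBasis_eq (norm_smul_inv_norm (𝕜 := ℝ) hu)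
  have hcoord : ∀ y, max ⟪y, u⟫ 0 = ‖u‖ * max (b.repr y i) 0 := by
    intro y
    rw [mul_max_of_nonneg _ _ (norm_nonneg u), mul_zero, b.repr_apply_apply, hb,
      real_inner_smul_left, real_inner_comm]
    simp [hu]
  have hisometry := b.repr.measurePreserving.integral_comp
    b.repr.toHomeomorph.measurableEmbedding fun y ↦ max (y i) 0 * exp (-‖y‖ ^ 2)
  simp only [b.repr.norm_map] at hisometry
  simp only [hcoord, mul_assoc, integral_const_mul, hisometry,
    integral_max_coord_mul_exp_neg_norm_sq, Fintype.card_fin]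
  ring

theorem integral_toSphere_max_inner_symm_div_norm_symm_pow (L : E ≃ₗ[ℝ] E) (u : E) :
    ∫ m : Metric.sphere (0 : E) 1, max ⟪L.symm m, u⟫ 0 / ‖L.symm m‖ ^ (finrank ℝ E + 1)
        ∂(volume : Measure E).toSphere
      = hemisphereMoment (finrank ℝ E) * |LinearMap.det (L : E →ₗ[ℝ] E)| * ‖u‖ := by
  rcases eq_or_ne u 0 with rfl | hu
  · simp
  have : Nontrivial E := ⟨u, 0, hu⟩
  have hgauss := integral_comp_linearEquiv_symm volume L fun y ↦ max ⟪y, u⟫ 0 * exp (-‖y‖ ^ 2)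
  rw [integral_max_inner_mul_exp_neg_norm_sq, smul_eq_mul] at hgauss
  have hdet : LinearMap.det (L : E →ₗ[ℝ] E) ≠ 0 := L.isUnit_det'.ne_zero
  have hint := Integrable.of_integral_ne_zero (hgauss.trans_ne (by positivity))
  have hL : ∀ m : Metric.sphere (0 : E) 1, L.symm m ≠ 0 := fun m ↦
    L.symm.map_ne_zero_iff.2 (ne_zero_of_mem_unit_sphere m)
  rw [integral_eq_integral_toSphere_integral_Ioi volume hint] at hgauss
  simp only [map_smul, integral_Ioi_pow_smul_max_inner_mul_exp (hL _), integral_const_mul] at hgauss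
  have hGamma : Gamma ((finrank ℝ E + 1) / 2) ≠ 0 := (Gamma_pos_of_pos (by positivity)).ne'
  rw [hemisphereMoment]
  field_simp [hGamma]
  linear_combination 2 * hgauss

end SphereIntegrals

section PrincipalRadius

open Module

variable {E : Type*} [NormedAddCommGroup E] [InnerProductSpace ℝ E] [MeasurableSpace E]
  [BorelSpace E]

/-- The principal radius in direction `n₀` of the local-hidden-state distribution `μ` on the unit
sphere: twice the `n₀`-component of `∫ n dμ(n)` over the hemisphere around `n₀`, divided by
`‖L n₀‖`. For a T-state with symmetric correlation matrix `T`, the map `L` is `n ↦ T n` and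
`‖L n₀‖ = √(n₀ᵀ T² n₀)`. -/
noncomputable def principalRadius (L : E →ₗ[ℝ] E) (μ : Measure (Metric.sphere (0 : E) 1))
    (n₀ : Metric.sphere (0 : E) 1) : ℝ :=
  2 * ⟪(n₀ : E), ∫ n in {p : Metric.sphere (0 : E) 1 | 0 ≤ ⟪(n₀ : E), (p : E)⟫}, (n : E) ∂μ⟫ /
    ‖L n₀‖

theorem measurableSet_hemisphere (x : E) :
    MeasurableSet {p : Metric.sphere (0 : E) 1 | 0 ≤ ⟪x, (p : E)⟫} :=
  (isClosed_le continuous_const (by fun_prop)).measurableSet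

theorem principalRadius_withDensity (L : E →ₗ[ℝ] E) {σ : Measure (Metric.sphere (0 : E) 1)}
    {f : Metric.sphere (0 : E) 1 → ℝ} (hf : AEMeasurable f σ) (hf₀ : ∀ n, 0 ≤ f n)
    (n₀ : Metric.sphere (0 : E) 1) :
    principalRadius L (σ.withDensity fun n ↦ ENNReal.ofReal (f n)) n₀ =
      2 * ⟪(n₀ : E), ∫ n, (Set.indicator
        {p : Metric.sphere (0 : E) 1 | 0 ≤ ⟪(n₀ : E), (p : E)⟫} f n) • (n : E) ∂σ⟫ / ‖L n₀‖ := by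
  have hs := measurableSet_hemisphere (n₀ : E)
  rw [principalRadius, setIntegral_withDensity_eq_setIntegral_toReal_smul₀
    hf.ennreal_ofReal.restrict (by simp) _ hs]
  simp only [← Set.indicator_smul_apply_left, integral_indicator hs, ENNReal.toReal_ofReal (hf₀ _)]

variable [FiniteDimensional ℝ E] (L : E →ₗ[ℝ] E) (μ : Measure (Metric.sphere (0 : E) 1))
  [IsFiniteMeasure μ]

theorem principalRadius_eq_integral_max (n₀ : Metric.sphere (0 : E) 1) :
    principalRadius L μ n₀ =
      2 * (∫ n : Metric.sphere (0 : E) 1, max ⟪(n₀ : E), (n : E)⟫ 0 ∂μ) / ‖L n₀‖ := by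
  have hs := measurableSet_hemisphere (n₀ : E)
  have hint : Integrable (fun n : Metric.sphere (0 : E) 1 ↦ (n : E)) μ :=
    continuous_subtype_val.integrable_of_hasCompactSupport (.of_compactSpace _)
  rw [principalRadius, ← integral_inner hint.integrableOn, ← integral_indicator hs]
  congr 3
  ext n
  rcases le_or_gt 0 ⟪(n₀ : E), (n : E)⟫ with hn | hn
  · simp [hn]
  · simp [hn.not_ge, hn.le]

theorem principalRadius_nonneg (n₀ : Metric.sphere (0 : E) 1) : 0 ≤ principalRadius L μ n₀ := by
  rw [principalRadius_eq_integral_max]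
  have : 0 ≤ ∫ n : Metric.sphere (0 : E) 1, max ⟪(n₀ : E), (n : E)⟫ 0 ∂μ :=
    integral_nonneg fun n ↦ le_max_right _ _
  positivity

theorem iInf_principalRadius_mul_norm_le (x : E) :
    (⨅ n₀, principalRadius L μ n₀) * ‖L x‖ ≤
      2 * ∫ n : Metric.sphere (0 : E) 1, max ⟪x, (n : E)⟫ 0 ∂μ := by
  have hrhs : 0 ≤ ∫ n : Metric.sphere (0 : E) 1, max ⟪x, (n : E)⟫ 0 ∂μ :=
    integral_nonneg fun n ↦ le_max_right _ _
  rcases eq_or_ne (L x) 0 with hLx | hLx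
  · simpa [hLx] using hrhs
  have hx : x ≠ 0 := fun h ↦ hLx (by rw [h, map_zero])
  have hnorm : 0 < ‖x‖ := norm_pos_iff.2 hx
  let n₀ : Metric.sphere (0 : E) 1 := ⟨‖x‖⁻¹ • x, by simp [norm_smul, hx]⟩
  have hmax : ∀ n : E, max ⟪(n₀ : E), n⟫ 0 = ‖x‖⁻¹ * max ⟪x, n⟫ 0 := by
    intro n
    rw [mul_max_of_nonneg _ _ (inv_nonneg.2 hnorm.le), mul_zero, real_inner_smul_left]
  have hbdd : BddBelow (Set.range (principalRadius L μ)) :=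
    ⟨0, Set.forall_mem_range.2 (principalRadius_nonneg L μ)⟩
  refine (mul_le_mul_of_nonneg_right (ciInf_le hbdd n₀) (norm_nonneg _)).trans_eq ?_
  simp only [principalRadius_eq_integral_max, hmax, integral_const_mul]
  rw [show L n₀ = ‖x‖⁻¹ • L x from map_smul L _ _, norm_smul, norm_inv, norm_norm]
  have := norm_pos_iff.2 hLx
  field_simp

end PrincipalRadius

section Averaging

open Module

variable {E : Type*} [NormedAddCommGroup E] [InnerProductSpace ℝ E] [FiniteDimensional ℝ E]
  (L : E ≃ₗ[ℝ] E)

theorem continuous_inv_norm_symm_pow (k : ℕ) :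
    Continuous fun m : Metric.sphere (0 : E) 1 ↦ (‖L.symm m‖ ^ k)⁻¹ := by
  have hcont : Continuous L.symm := L.symm.toLinearMap.continuous_of_finiteDimensional
  refine Continuous.inv₀ (by fun_prop) fun m ↦ pow_ne_zero _ (norm_ne_zero_iff.2 ?_)
  exact L.symm.map_ne_zero_iff.2 (ne_zero_of_mem_unit_sphere m)

variable [MeasurableSpace E] [BorelSpace E] (μ : Measure (Metric.sphere (0 : E) 1))
  [IsFiniteMeasure μ]

theorem integrable_max_inner_symm_div_norm_symm_pow (k : ℕ)
    (σ : Measure (Metric.sphere (0 : E) 1)) [IsFiniteMeasure σ] :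
    Integrable (fun p : Metric.sphere (0 : E) 1 × Metric.sphere (0 : E) 1 ↦
      max ⟪L.symm p.1, (p.2 : E)⟫ 0 / ‖L.symm p.1‖ ^ k) (σ.prod μ) := by
  have hcont : Continuous L.symm := L.symm.toLinearMap.continuous_of_finiteDimensional
  have hnumerator : Continuous fun p : Metric.sphere (0 : E) 1 × Metric.sphere (0 : E) 1 ↦
      max ⟪L.symm p.1, (p.2 : E)⟫ 0 := by fun_prop
  have hkernel := hnumerator.mul ((continuous_inv_norm_symm_pow L k).comp continuous_fst)
  exact hkernel.integrable_of_hasCompactSupport (.of_compactSpace _)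

theorem integral_integral_max_inner_symm_div_norm_symm_pow :
    ∫ m : Metric.sphere (0 : E) 1, (∫ n : Metric.sphere (0 : E) 1,
        max ⟪L.symm m, (n : E)⟫ 0 / ‖L.symm m‖ ^ (finrank ℝ E + 1) ∂μ)
          ∂(volume : Measure E).toSphere
      = hemisphereMoment (finrank ℝ E) * |LinearMap.det (L : E →ₗ[ℝ] E)| * μ.real .univ := by
  rw [integral_integral_swap (integrable_max_inner_symm_div_norm_symm_pow L μ _ _)]
  simp only [integral_toSphere_max_inner_symm_div_norm_symm_pow, norm_eq_of_mem_sphere, mul_one,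
    integral_const, smul_eq_mul]
  ring

theorem iInf_principalRadius_le_integral_max (m : Metric.sphere (0 : E) 1) :
    (⨅ n₀, principalRadius L μ n₀) ≤
      2 * ∫ n : Metric.sphere (0 : E) 1, max ⟪L.symm m, (n : E)⟫ 0 ∂μ := by
  simpa using iInf_principalRadius_mul_norm_le L.toLinearMap μ (L.symm m)

theorem iInf_principalRadius_mul_integral_le :
    (⨅ n₀, principalRadius L μ n₀) *
        ∫ m : Metric.sphere (0 : E) 1, (‖L.symm m‖ ^ (finrank ℝ E + 1))⁻¹
          ∂(volume : Measure E).toSphere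
      ≤ 2 * hemisphereMoment (finrank ℝ E) * |LinearMap.det (L : E →ₗ[ℝ] E)| * μ.real .univ := by
  have hweight : Integrable (fun m : Metric.sphere (0 : E) 1 ↦
      (‖L.symm m‖ ^ (finrank ℝ E + 1))⁻¹) (volume : Measure E).toSphere :=
    (continuous_inv_norm_symm_pow L _).integrable_of_hasCompactSupport (.of_compactSpace _)
  have hkernel := integrable_max_inner_symm_div_norm_symm_pow L μ (finrank ℝ E + 1)
    (volume : Measure E).toSphere
  calc _ = ∫ m : Metric.sphere (0 : E) 1, (⨅ n₀, principalRadius L μ n₀) *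
        (‖L.symm m‖ ^ (finrank ℝ E + 1))⁻¹ ∂(volume : Measure E).toSphere :=
        (integral_const_mul _ _).symm
    _ ≤ ∫ m : Metric.sphere (0 : E) 1, 2 * (∫ n : Metric.sphere (0 : E) 1,
        max ⟪L.symm m, (n : E)⟫ 0 / ‖L.symm m‖ ^ (finrank ℝ E + 1) ∂μ)
          ∂(volume : Measure E).toSphere := by
        refine integral_mono (hweight.const_mul _)
          (hkernel.integral_prod_left.const_mul 2) fun m ↦ ?_
        simp only [integral_div]
        rw [← mul_div_assoc, div_eq_mul_inv]
        gcongr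
        exact iInf_principalRadius_le_integral_max L μ m
    _ = _ := by
        rw [integral_const_mul, integral_integral_max_inner_symm_div_norm_symm_pow]
        ring

end Averaging

theorem inner_toEuclideanLin_mul_self {ι : Type*} [Fintype ι] [DecidableEq ι]
    {S : Matrix ι ι ℝ} (hS : S.IsSymm) (x : EuclideanSpace ℝ ι) :
    ⟪x, Matrix.toEuclideanLin (S * S) x⟫ = ‖Matrix.toEuclideanLin S x‖ ^ 2 := by
  have hsymm : S.toEuclideanLin.IsSymmetric :=
    Matrix.isSymmetric_toEuclideanLin_iff.2 (S.conjTranspose_eq_transpose_of_trivial.trans hS)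
  have hmul : (S * S).toEuclideanLin x = S.toEuclideanLin (S.toEuclideanLin x) := by
    simp [Matrix.toLpLin_apply]
  rw [hmul, ← hsymm, real_inner_self_eq_norm_sq]

theorem isProbabilityMeasure_withDensity_ofReal {α : Type*} [MeasurableSpace α] {σ : Measure α}
    {f : α → ℝ} (hf₀ : ∀ a, 0 ≤ f a) (hf : ∫ a, f a ∂σ = 1) :
    IsProbabilityMeasure (σ.withDensity fun a ↦ ENNReal.ofReal (f a)) where
  measure_univ := by
    have hint : Integrable f σ := .of_integral_ne_zero (hf.trans_ne one_ne_zero)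
    rw [withDensity_apply _ .univ, Measure.restrict_univ,
      ← ofReal_integral_eq_lintegral_ofReal hint (.of_forall hf₀), hf, ENNReal.ofReal_one]

theorem stmt9_general {E : Type*} [NormedAddCommGroup E] [InnerProductSpace ℝ E]
    [FiniteDimensional ℝ E] [MeasurableSpace E] [BorelSpace E] (L : E ≃ₗ[ℝ] E) {N : ℝ}
    (hN : ∫ n : Metric.sphere (0 : E) 1, N / ‖L.symm n‖ ^ (Module.finrank ℝ E + 1)
      ∂(volume : Measure E).toSphere = 1)
    (μ : Measure (Metric.sphere (0 : E) 1)) [IsProbabilityMeasure μ] :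
    (⨅ n₀, principalRadius L μ n₀) ≤
      2 * hemisphereMoment (Module.finrank ℝ E) * N * |LinearMap.det (L : E →ₗ[ℝ] E)| := by
  have hN' : N * ∫ n : Metric.sphere (0 : E) 1, (‖L.symm n‖ ^ (Module.finrank ℝ E + 1))⁻¹
      ∂(volume : Measure E).toSphere = 1 := by
    simpa only [div_eq_mul_inv, integral_const_mul] using hN
  have hI : 0 ≤ ∫ n : Metric.sphere (0 : E) 1, (‖L.symm n‖ ^ (Module.finrank ℝ E + 1))⁻¹
      ∂(volume : Measure E).toSphere := integral_nonneg fun n ↦ by positivity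
  have hN₀ : 0 ≤ N := (pos_of_mul_pos_left (hN'.symm ▸ one_pos) hI).le
  have hle := mul_le_mul_of_nonneg_left (iInf_principalRadius_mul_integral_le L μ) hN₀
  rw [mul_left_comm, hN', mul_one, probReal_univ, mul_one] at hle
  linarith

theorem stmt9 (T : Matrix (Fin 3) (Fin 3) ℝ) (hT : IsUnit T.det) (hTsymm : T.IsSymm)
    (N : ℝ) (hN : 0 < N)
    (dS : Measure (Metric.sphere (0 : EuclideanSpace ℝ (Fin 3)) 1))
    (hdS : dS = (volume : Measure (EuclideanSpace ℝ (Fin 3))).toSphere)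
    (J : Metric.sphere (0 : EuclideanSpace ℝ (Fin 3)) 1 → ℝ)
    (hJ : ∀ n, J n = N / (⟪(n : EuclideanSpace ℝ (Fin 3)),
        Matrix.toEuclideanLin (T⁻¹ * T⁻¹) (n : EuclideanSpace ℝ (Fin 3))⟫)^2)
    (hnorm : ∫ n, J n ∂dS = 1)
    (v : Metric.sphere (0 : EuclideanSpace ℝ (Fin 3)) 1 → ℝ)
    (hvint : Integrable v dS)
    (hvsymm : ∀ n, v (-n) = v n)
    (hv0 : ∫ n, v n ∂dS = 0)
    (hpos : ∀ n, 0 ≤ J n + v n)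
    (r : Metric.sphere (0 : EuclideanSpace ℝ (Fin 3)) 1 → ℝ)
    (hr : ∀ n₀, r n₀ = 2 * ⟪(n₀ : EuclideanSpace ℝ (Fin 3)),
        ∫ n, (Set.indicator
            {p : Metric.sphere (0 : EuclideanSpace ℝ (Fin 3)) 1 |
              0 ≤ ⟪(n₀ : EuclideanSpace ℝ (Fin 3)), (p : EuclideanSpace ℝ (Fin 3))⟫}
            (fun p => J p + v p) n) • (n : EuclideanSpace ℝ (Fin 3)) ∂dS⟫ /
        Real.sqrt (⟪(n₀ : EuclideanSpace ℝ (Fin 3)),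
          Matrix.toEuclideanLin (T * T) (n₀ : EuclideanSpace ℝ (Fin 3))⟫)) :
    (⨅ n₀, r n₀) ≤ 2 * Real.pi * N * |T.det| := by
  subst hdS
  have hJint : Integrable J (volume : Measure _).toSphere :=
    .of_integral_ne_zero (hnorm.trans_ne one_ne_zero)
  have hmass : ∫ n, (J n + v n) ∂(volume : Measure _).toSphere = 1 := by
    rw [integral_add hJint hvint, hnorm, hv0, add_zero]
  let μ := (volume : Measure _).toSphere.withDensity fun n ↦ ENNReal.ofReal (J n + v n)
  have : IsProbabilityMeasure μ := isProbabilityMeasure_withDensity_ofReal hpos hmass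
  let L := T.toLinearEquiv (EuclideanSpace.basisFun (Fin 3) ℝ).toBasis hT
  have hLsymm : ∀ x, L.symm x = T⁻¹.toEuclideanLin x := fun _ ↦ rfl
  have hdet : LinearMap.det L.toLinearMap = T.det := LinearMap.det_toLin _ _
  have hradius : r = principalRadius L.toLinearMap μ := funext fun n₀ ↦ by
    rw [hr, inner_toEuclideanLin_mul_self hTsymm, Real.sqrt_sq (norm_nonneg _)]
    exact (principalRadius_withDensity L.toLinearMap (hJint.add hvint).aemeasurable hpos n₀).symm
  have hle := stmt9_general L (N := N) (by simpa only [hJ, inner_toEuclideanLin_mul_self hTsymm.inv,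
    ← pow_mul, hLsymm, finrank_euclideanSpace_fin] using hnorm) μ
  simpa only [hradius, finrank_euclideanSpace_fin, hemisphereMoment_three, hdet] using hle
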